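/- Let r = √5 ∈ ℂ. The derivation module D(𝒜_ℭ) of the central hyperplane arrangement 𝒜_ℭ in ℂ⁴ with defining equation Q_ℭ = x·y·z·w·(x+y+z)·((r−1)y−2z+2w)·(2x+2y+(r−1)w)·((−r+3)x+2y+(−r+1)z+(r−1)w) is not a free module over S = ℂ[x,y,z,w]. -/

import Mathlib

open MvPolynomial

noncomputable section

/-- The polynomial ring `S = ℂ[x,y,z,w]`, with `x = X 0`, `y = X 1`, `z = X 2`, `w = X 3`. -/
abbrev S4 : Type := MvPolynomial (Fin 4) ℂ

/-- The linear form `c₀·x + c₁·y + c₂·z + c₃·w` with coefficient vector `c`. -/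
noncomputable def linForm (c : Fin 4 → ℂ) : S4 := ∑ i, C (c i) * X i

/-- A polynomial derivation `θ = a₁∂ₓ + a₂∂_y + a₃∂_z + a₄∂_w` of `S` is identified with
its coefficient tuple `a : Fin 4 → S`; the linear map `derMap f` sends `a` to `θ(f)`. -/
noncomputable def derMap (f : S4) : (Fin 4 → S4) →ₗ[S4] S4 where
  toFun a := ∑ i, a i * pderiv i f
  map_add' a b := by simp [add_mul, Finset.sum_add_distrib]
  map_smul' c a := by simp [Finset.mul_sum, mul_assoc]

/-- The derivation module `D(𝒜)` of the central arrangement whose hyperplanes are the kernels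
of the linear forms `linForm (α H)`: all derivations `θ` with `θ(α_H) ∈ S·α_H` for every `H`. -/
noncomputable def derivModule {ι : Type} (α : ι → (Fin 4 → ℂ)) :
    Submodule S4 (Fin 4 → S4) :=
  ⨅ H, Submodule.comap (derMap (linForm (α H))) (Ideal.span {linForm (α H)})

end

/-- `r = √5` regarded as a complex number. -/
noncomputable def r : ℂ := Real.sqrt 5

/-- The coefficient vectors of the eight linear factors of Q = xyzw(x+y+z)((r-1)y-2z+2w)(2x+2y+(r-1)w)((-r+3)x+2y+(-r+1)z+(r-1)w), defining the rigid Cynk–Szemberg octic arrangement 𝒜_ℭ ⊂ ℙ³. -/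
noncomputable def AFrakC : Fin 8 → (Fin 4 → ℂ) :=
  ![![1, 0, 0, 0],
    ![0, 1, 0, 0],
    ![0, 0, 1, 0],
    ![0, 0, 0, 1],
    ![1, 1, 1, 0],
    ![0, r-1, -2, 2],
    ![2, 2, 0, r-1],
    ![-r+3, 2, -r+1, r-1]]

/-!
Freeness of `D(𝒜)` forces all its fibres to have dimension at most `4`, and the fibre at a point
`p` depends only on the planes through `p`, since the product of the other forms is invertible at
`p`. Suppose these planes are the kernels of independent forms `β₀, β₁, β₂` and of
`β = c₀ β₀ + c₁ β₁ + c₂ β₂` with all `cᵢ ≠ 0`. Writing `θ(βᵢ) = fᵢ βᵢ` and `θ(β) = f β`, the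
relation `∑ cᵢ (fᵢ - f) βᵢ = 0` makes every `fᵢ - f` vanish at `p`, so their first derivatives at
`p` depend only on the class of `θ` in the fibre. With `vⱼ` dual to `βⱼ`, the derivatives of
`fᵢ - f` along `vⱼ` for `i < j`, the value `f(p)` and the `k`-th coordinate of `θ(p)`, where
`pₖ ≠ 0`, are `5` independent functionals on the fibre: test them on the derivations
`βᵢ βⱼ (cⱼ ∂ᵥᵢ - cᵢ ∂ᵥⱼ)`, the Euler derivation and `∂ₚ`. In `𝒜_ℭ` the planes through
`p = (0, 0, 0, 1)` are `x = 0`, `y = 0`, `z = 0` and `x + y + z = 0`.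
-/

section SemilinearMaps

variable {R K M V : Type*} [CommRing R] [Field K] {ε : R →+* K}
  [AddCommGroup M] [Module R M] [AddCommGroup V] [Module K V]

theorem finrank_le_of_surjective_semilinear [Module.Free R M] [Module.Finite R M]
    (φ : M →ₛₗ[ε] V) (hφ : Function.Surjective φ) : Module.finrank K V ≤ Module.finrank R M := by
  have := ε.domain_nontrivial
  let b := Module.finBasis R M
  have hspan : Submodule.span K (Set.range (φ ∘ b)) = ⊤ := by
    refine eq_top_iff.mpr fun v _ => ?_
    obtain ⟨m, rfl⟩ := hφ v
    have hle : Submodule.span R (Set.range b) ≤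
        (Submodule.span K (Set.range (φ ∘ b))).comap φ :=
      Submodule.span_le.mpr <| Set.range_subset_iff.mpr fun i => Submodule.subset_span ⟨i, rfl⟩
    exact hle (b.mem_span m)
  calc Module.finrank K V = Set.finrank K (Set.range (φ ∘ b)) := by
        rw [Set.finrank, hspan, finrank_top]
    _ ≤ Fintype.card (Fin (Module.finrank R M)) := finrank_range_le_card (φ ∘ b)
    _ = Module.finrank R M := Fintype.card_fin _

theorem surjective_comp_inclusion_of_smul_mem {D N : Submodule R M} (hDN : D ≤ N)
    {q : R} (hq : ε q ≠ 0) (hqN : ∀ a ∈ N, q • a ∈ D)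
    (φ : N →ₛₗ[ε] V) (hφ : Function.Surjective φ) :
    Function.Surjective (φ.comp (Submodule.inclusion hDN)) := by
  intro v
  obtain ⟨a, ha⟩ := hφ ((ε q)⁻¹ • v)
  refine ⟨⟨q • a.1, hqN a.1 a.2⟩, ?_⟩
  change φ (q • a) = v
  rw [map_smulₛₗ, ha, smul_inv_smul₀ hq]

end SemilinearMaps

theorem eval_derivation_mul_of_eval_eq_zero {σ R : Type*} [CommRing R] {p : σ → R}
    (d : Derivation R (MvPolynomial σ R) (MvPolynomial σ R)) {g : MvPolynomial σ R}
    (hg : eval p g = 0) (s : MvPolynomial σ R) :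
    eval p (d (s * g)) = eval p s * eval p (d g) := by
  simp [hg]

theorem exists_dotProduct_eq_ite_of_linearIndependent {K m n : Type*} [Field K] [Finite m]
    [DecidableEq m] [Fintype n] {β : m → n → K} (hβ : LinearIndependent K β) :
    ∃ v : m → n → K, ∀ i j, β i ⬝ᵥ v j = if i = j then 1 else 0 := by
  cases nonempty_fintype m
  have hrange : LinearMap.range (Matrix.of β).mulVecLin = ⊤ := by
    apply Submodule.eq_top_of_finrank_eq
    rw [Module.finrank_fintype_fun_eq_card]
    exact LinearIndependent.rank_matrix hβ
  obtain ⟨B, hB⟩ := Matrix.mulVec_surjective_iff_exists_right_inverse.mp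
    (LinearMap.range_eq_top.mp hrange)
  exact ⟨B.transpose, fun i j => (congrFun₂ hB i j).trans Matrix.one_apply⟩

section LinearForms

theorem eval_linForm (p c : Fin 4 → ℂ) : eval p (linForm c) = c ⬝ᵥ p := by
  simp [linForm, dotProduct]

theorem linForm_sum_smul {κ : Type*} [Fintype κ] (c : κ → ℂ) (β : κ → Fin 4 → ℂ) :
    linForm (∑ i, c i • β i) = ∑ i, C (c i) * linForm (β i) := by
  simp only [linForm, Finset.sum_apply, Pi.smul_apply, smul_eq_mul, map_sum, map_mul,
    Finset.sum_mul, Finset.mul_sum, mul_assoc]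
  exact Finset.sum_comm

theorem linForm_ne_zero_of_dotProduct_ne_zero {c v : Fin 4 → ℂ} (h : c ⬝ᵥ v ≠ 0) :
    linForm c ≠ 0 := by
  intro h₀
  rw [← eval_linForm, h₀, map_zero] at h
  exact h rfl

theorem derMap_eq_mkDerivation (f : S4) (a : Fin 4 → S4) : derMap f a = mkDerivation ℂ a f := by
  have hsum (g : S4) : (∑ i, a i • pderiv i : Derivation ℂ S4 S4) g = ∑ i, a i * pderiv i g := by
    simp [Fin.sum_univ_four]
  have hext : ∑ i, a i • pderiv i = mkDerivation ℂ a :=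
    derivation_ext fun i => by simp [hsum, pderiv_X, Pi.single_apply]
  rw [← hext, hsum]
  rfl

theorem derMap_linForm (c : Fin 4 → ℂ) (a : Fin 4 → S4) :
    derMap (linForm c) a = ∑ i, C (c i) * a i := by
  simp [derMap_eq_mkDerivation, linForm]

theorem derMap_linForm_sum_smul {κ : Type*} [Fintype κ] (c : κ → ℂ) (β : κ → Fin 4 → ℂ)
    (a : Fin 4 → S4) :
    derMap (linForm (∑ i, c i • β i)) a = ∑ i, C (c i) * derMap (linForm (β i)) a := by
  simp [derMap_eq_mkDerivation, linForm_sum_smul]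

/-- The coefficient tuple of the Euler derivation `x∂ₓ + y∂_y + z∂_z + w∂_w`. -/
noncomputable def eulerField : Fin 4 → S4 := X

theorem derMap_linForm_eulerField (c : Fin 4 → ℂ) :
    derMap (linForm c) eulerField = linForm c :=
  derMap_linForm c X

/-- The coefficient tuple of the derivative in the direction `v`. -/
noncomputable def constField (v : Fin 4 → ℂ) : Fin 4 → S4 := fun i => C (v i)

theorem derMap_linForm_constField (c v : Fin 4 → ℂ) :
    derMap (linForm c) (constField v) = C (c ⬝ᵥ v) := by
  simp [derMap_linForm, constField, dotProduct]

/-- The derivative of polynomials in the direction `v`. -/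
noncomputable def dirDeriv (v : Fin 4 → ℂ) : Derivation ℂ S4 S4 := mkDerivation ℂ (constField v)

theorem dirDeriv_linForm (v c : Fin 4 → ℂ) : dirDeriv v (linForm c) = C (c ⬝ᵥ v) := by
  rw [dirDeriv, ← derMap_eq_mkDerivation, derMap_linForm_constField]

end LinearForms

section DerivationModule

variable {ι κ : Type} {α : ι → Fin 4 → ℂ}

theorem mem_derivModule {a : Fin 4 → S4} :
    a ∈ derivModule α ↔ ∀ H, linForm (α H) ∣ derMap (linForm (α H)) a := by
  simp [derivModule, Ideal.mem_span_singleton]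

theorem derivModule_le_comp (α : ι → Fin 4 → ℂ) (e : κ → ι) :
    derivModule α ≤ derivModule (α ∘ e) :=
  fun _ ha => mem_derivModule.mpr fun k => mem_derivModule.mp ha (e k)

theorem exists_smul_mem_derivModule_of_mem_comp [Finite ι] {e : κ → ι} {p : Fin 4 → ℂ}
    (hp : ∀ H ∉ Set.range e, α H ⬝ᵥ p ≠ 0) :
    ∃ q : S4, eval p q ≠ 0 ∧ ∀ a ∈ derivModule (α ∘ e), q • a ∈ derivModule α := by
  let T := (Set.toFinite (Set.range e)ᶜ).toFinset
  refine ⟨∏ H ∈ T, linForm (α H), ?_, fun a ha => mem_derivModule.mpr fun H => ?_⟩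
  · rw [map_prod, Finset.prod_ne_zero_iff]
    intro H hH
    rw [eval_linForm]
    exact hp H (by simpa [T] using hH)
  · rw [map_smul, smul_eq_mul]
    by_cases hH : H ∈ Set.range e
    · obtain ⟨k, rfl⟩ := hH
      exact (mem_derivModule.mp ha k).mul_left _
    · exact dvd_mul_of_dvd_left
        (Finset.dvd_prod_of_mem (fun H => linForm (α H)) (by simpa [T] using hH)) _

theorem finrank_le_four_of_free_derivModule [Finite ι] [Module.Free S4 (derivModule α)]
    {e : κ → ι} {β : κ → Fin 4 → ℂ} (he : ∀ i, α (e i) = β i) {p : Fin 4 → ℂ}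
    (hp : ∀ H ∉ Set.range e, α H ⬝ᵥ p ≠ 0) {V : Type*} [AddCommGroup V] [Module ℂ V]
    (φ : derivModule β →ₛₗ[eval p] V) (hφ : Function.Surjective φ) : Module.finrank ℂ V ≤ 4 := by
  obtain rfl : α ∘ e = β := funext he
  obtain ⟨q, hq, hqmem⟩ := exists_smul_mem_derivModule_of_mem_comp hp
  have hle := derivModule_le_comp α e
  calc Module.finrank ℂ V ≤ Module.finrank S4 (derivModule α) :=
        finrank_le_of_surjective_semilinear (φ.comp (Submodule.inclusion hle))
          (surjective_comp_inclusion_of_smul_mem hle hq hqmem φ hφ)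
    _ ≤ Module.finrank S4 (Fin 4 → S4) := Submodule.finrank_le _
    _ = 4 := Module.finrank_fin_fun S4

theorem derMap_mem_span_singleton (H : ι) :
    ∀ a ∈ derivModule α, derMap (linForm (α H)) a ∈ Submodule.span S4 {linForm (α H)} :=
  fun _ ha => Ideal.mem_span_singleton.mpr (mem_derivModule.mp ha H)

open Classical in
/-- The `S`-linear map sending `θ ∈ D(𝒜)` to the quotient `θ(α_H) / α_H`, with value `0` in the
degenerate case `α_H = 0`. -/
noncomputable def logCoeff (α : ι → Fin 4 → ℂ) (H : ι) : derivModule α →ₗ[S4] S4 :=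
  if h : linForm (α H) = 0 then 0
  else (LinearEquiv.toSpanNonzeroSingleton S4 S4 _ h).symm.toLinearMap ∘ₗ
    (derMap (linForm (α H))).restrict (derMap_mem_span_singleton H)

theorem linForm_mul_logCoeff (H : ι) (a : derivModule α) :
    linForm (α H) * logCoeff α H a = derMap (linForm (α H)) a := by
  unfold logCoeff
  split_ifs with h
  · simp [h, derMap]
  · have hs := LinearEquiv.toSpanNonzeroSingleton_symm_apply_smul S4 S4 _ h
      ⟨_, derMap_mem_span_singleton H a a.2⟩
    rw [smul_eq_mul, mul_comm] at hs
    exact hs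

theorem logCoeff_eq {H : ι} (hH : linForm (α H) ≠ 0) {a : derivModule α} {g : S4}
    (h : derMap (linForm (α H)) a = linForm (α H) * g) : logCoeff α H a = g :=
  mul_left_cancel₀ hH <| (linForm_mul_logCoeff H a).trans h

end DerivationModule

/-- The forms `∑ i, c i • β i, β 0, …, β (n - 1)`. When the `β i` are linearly independent and the
`c i` are nonzero, the only linear relation among them involves them all. -/
def circuit {n : ℕ} (β : Fin n → Fin 4 → ℂ) (c : Fin n → ℂ) : Fin (n + 1) → Fin 4 → ℂ :=
  Fin.cons (∑ i, c i • β i) β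

section Circuit

variable {n : ℕ} {β v : Fin n → Fin 4 → ℂ} {c : Fin n → ℂ} {p : Fin 4 → ℂ}

@[simp]
theorem circuit_zero : circuit β c 0 = ∑ i, c i • β i := rfl

@[simp]
theorem circuit_succ (i : Fin n) : circuit β c i.succ = β i := rfl

theorem mem_derivModule_circuit {a : Fin 4 → S4} :
    a ∈ derivModule (circuit β c) ↔
      linForm (∑ i, c i • β i) ∣ derMap (linForm (∑ i, c i • β i)) a ∧
        ∀ i, linForm (β i) ∣ derMap (linForm (β i)) a := by
  simp [mem_derivModule, Fin.forall_fin_succ]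

theorem sum_linForm_mul_logCoeff_sub_eq_zero (a : derivModule (circuit β c)) :
    ∑ i, C (c i) * linForm (β i) *
      (logCoeff (circuit β c) i.succ a - logCoeff (circuit β c) 0 a) = 0 := by
  have hzero : linForm (∑ i, c i • β i) * logCoeff (circuit β c) 0 a =
      derMap (linForm (∑ i, c i • β i)) a := linForm_mul_logCoeff 0 a
  have hsucc (i : Fin n) : linForm (β i) * logCoeff (circuit β c) i.succ a =
      derMap (linForm (β i)) a := linForm_mul_logCoeff i.succ a
  rw [derMap_linForm_sum_smul, linForm_sum_smul, Finset.sum_mul] at hzero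
  simp only [mul_assoc] at hzero
  simp only [mul_sub, Finset.sum_sub_distrib, mul_assoc, hsucc, hzero, sub_self]

theorem eval_logCoeff_sub_eq_zero (hβv : ∀ i j, β i ⬝ᵥ v j = if i = j then 1 else 0)
    (hc : ∀ i, c i ≠ 0) (hp : ∀ i, β i ⬝ᵥ p = 0) (a : derivModule (circuit β c)) (j : Fin n) :
    eval p (logCoeff (circuit β c) j.succ a - logCoeff (circuit β c) 0 a) = 0 := by
  set g := fun i : Fin n => logCoeff (circuit β c) i.succ a - logCoeff (circuit β c) 0 a
  have hterm (i : Fin n) : eval p (dirDeriv (v j) (C (c i) * linForm (β i) * g i)) =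
      if i = j then c i * eval p (g i) else 0 := by
    rw [mul_right_comm, eval_derivation_mul_of_eval_eq_zero _ (by rw [eval_linForm, hp]),
      dirDeriv_linForm, hβv]
    split_ifs <;> simp
  have hsum : c j * eval p (g j) = 0 := calc
    c j * eval p (g j) = ∑ i, eval p (dirDeriv (v j) (C (c i) * linForm (β i) * g i)) := by
      simp only [hterm, Finset.sum_ite_eq', Finset.mem_univ, if_true]
    _ = eval p (dirDeriv (v j) (∑ i, C (c i) * linForm (β i) * g i)) := by simp only [map_sum]
    _ = 0 := by rw [sum_linForm_mul_logCoeff_sub_eq_zero, map_zero, map_zero]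
  exact (mul_eq_zero.mp hsum).resolve_left (hc j)

/-- The pairs `(i, j)` with `i < j`. -/
abbrev IncreasingPair (n : ℕ) : Type := {ij : Fin n × Fin n // ij.1 < ij.2}

/-- For `θ ∈ D(circuit β c)` with `θ(βᵢ) = fᵢ βᵢ` and `θ(∑ cᵢ βᵢ) = f ∑ cᵢ βᵢ`: the `k`-th
coordinate of `θ` at `p`, the value `f(p)`, and for each `i < j` the derivative of `fᵢ - f` at `p`
in the direction `v j`. -/
noncomputable def principalPart (hβv : ∀ i j, β i ⬝ᵥ v j = if i = j then 1 else 0)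
    (hc : ∀ i, c i ≠ 0) (hp : ∀ i, β i ⬝ᵥ p = 0) (k : Fin 4) :
    derivModule (circuit β c) →ₛₗ[eval p] ℂ × ℂ × (IncreasingPair n → ℂ) where
  toFun a :=
    (eval p (a.1 k), eval p (logCoeff (circuit β c) 0 a), fun ij =>
      eval p (dirDeriv (v ij.1.2)
        (logCoeff (circuit β c) ij.1.1.succ a - logCoeff (circuit β c) 0 a)))
  map_add' a b := by
    refine Prod.ext (by simp) <| Prod.ext (by simp) <| funext fun ij => ?_
    simp only [map_add, add_sub_add_comm]
    rfl
  map_smul' s a := by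
    refine Prod.ext (by simp) <| Prod.ext (by simp) <| funext fun ij => ?_
    simp only [map_smul, smul_eq_mul, ← mul_sub]
    exact eval_derivation_mul_of_eval_eq_zero _ (eval_logCoeff_sub_eq_zero hβv hc hp a _) s

/-- The derivation `βᵢ βⱼ (cⱼ ∂ᵥᵢ - cᵢ ∂ᵥⱼ)`; if `v` is dual to `β`, it kills the dependent form
`∑ cᵢ βᵢ`. -/
noncomputable def koszulField (β v : Fin n → Fin 4 → ℂ) (c : Fin n → ℂ) (i j : Fin n) :
    Fin 4 → S4 :=
  (linForm (β i) * linForm (β j)) • constField (c j • v i - c i • v j)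

theorem derMap_linForm_koszulField (γ : Fin 4 → ℂ) (i j : Fin n) :
    derMap (linForm γ) (koszulField β v c i j) =
      linForm (β i) * linForm (β j) * C (c j * (γ ⬝ᵥ v i) - c i * (γ ⬝ᵥ v j)) := by
  simp [koszulField, derMap_linForm_constField, dotProduct_sub]

theorem sum_smul_dotProduct_dual (hβv : ∀ i j, β i ⬝ᵥ v j = if i = j then 1 else 0) (j : Fin n) :
    (∑ i, c i • β i) ⬝ᵥ v j = c j := by
  simp [sum_dotProduct, hβv]

/-- The quotient of `koszulField β v c i j` applied to `βₖ` by `βₖ`, when `v` is dual to `β`. -/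
noncomputable def koszulCoeff (β : Fin n → Fin 4 → ℂ) (c : Fin n → ℂ) (i j k : Fin n) : S4 :=
  (if k = i then C (c j) * linForm (β j) else 0) - if k = j then C (c i) * linForm (β i) else 0

theorem derMap_linForm_apply_koszulField (hβv : ∀ i j, β i ⬝ᵥ v j = if i = j then 1 else 0)
    (i j k : Fin n) :
    derMap (linForm (β k)) (koszulField β v c i j) =
      linForm (β k) * koszulCoeff β c i j k := by
  rw [derMap_linForm_koszulField, hβv, hβv, koszulCoeff]
  split_ifs with hi hj hj <;> subst_vars <;> simp <;> ring

theorem dirDeriv_koszulCoeff_of_lt (hβv : ∀ i j, β i ⬝ᵥ v j = if i = j then 1 else 0)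
    {i j k l : Fin n} (hij : i < j) (hkl : k < l) :
    dirDeriv (v l) (koszulCoeff β c i j k) = if k = i ∧ l = j then C (c j) else 0 := by
  have hswap : ¬(k = j ∧ l = i) := fun h => hij.asymm (h.1 ▸ h.2 ▸ hkl)
  have hderiv (m q : Fin n) : dirDeriv (v l) (C (c m) * linForm (β q)) =
      if l = q then C (c m) else 0 := by
    rw [Derivation.leibniz, derivation_C, smul_zero, add_zero, dirDeriv_linForm, hβv]
    simp [eq_comm]
  rw [koszulCoeff, map_sub, apply_ite (dirDeriv (v l)), apply_ite (dirDeriv (v l)), hderiv, hderiv,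
    map_zero, ← ite_and, ← ite_and, if_neg hswap, sub_zero]

theorem derMap_linForm_sum_smul_koszulField
    (hβv : ∀ i j, β i ⬝ᵥ v j = if i = j then 1 else 0) (i j : Fin n) :
    derMap (linForm (∑ k, c k • β k)) (koszulField β v c i j) = 0 := by
  simp [derMap_linForm_koszulField, sum_smul_dotProduct_dual hβv, mul_comm]

theorem linForm_ne_zero_of_dual (hβv : ∀ i j, β i ⬝ᵥ v j = if i = j then 1 else 0) (i : Fin n) :
    linForm (β i) ≠ 0 :=
  linForm_ne_zero_of_dotProduct_ne_zero (v := v i) (by simp [hβv])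

theorem linForm_sum_smul_ne_zero_of_dual [NeZero n]
    (hβv : ∀ i j, β i ⬝ᵥ v j = if i = j then 1 else 0) (hc : ∀ i, c i ≠ 0) :
    linForm (∑ i, c i • β i) ≠ 0 :=
  linForm_ne_zero_of_dotProduct_ne_zero (v := v 0) (by simp [sum_smul_dotProduct_dual hβv, hc])

theorem constField_mem_derivModule_circuit (hp : ∀ i, β i ⬝ᵥ p = 0) :
    constField p ∈ derivModule (circuit β c) :=
  mem_derivModule_circuit.mpr (by simp [derMap_linForm_constField, hp, sum_dotProduct])

theorem eulerField_mem_derivModule {ι : Type} (α : ι → Fin 4 → ℂ) : eulerField ∈ derivModule α :=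
  mem_derivModule.mpr fun _ => (derMap_linForm_eulerField _).symm.dvd

theorem koszulField_mem_derivModule_circuit
    (hβv : ∀ i j, β i ⬝ᵥ v j = if i = j then 1 else 0) (i j : Fin n) :
    koszulField β v c i j ∈ derivModule (circuit β c) :=
  mem_derivModule_circuit.mpr ⟨(derMap_linForm_sum_smul_koszulField hβv i j).symm ▸ dvd_zero _,
    fun k => ⟨_, derMap_linForm_apply_koszulField hβv i j k⟩⟩

section PrincipalPart

variable [NeZero n] (hβv : ∀ i j, β i ⬝ᵥ v j = if i = j then 1 else 0) (hc : ∀ i, c i ≠ 0)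
  (hp : ∀ i, β i ⬝ᵥ p = 0) (k : Fin 4)

theorem principalPart_eq {a : Fin 4 → S4} (ha : a ∈ derivModule (circuit β c)) {f : S4}
    {g : Fin n → S4} (hf : derMap (linForm (∑ i, c i • β i)) a = linForm (∑ i, c i • β i) * f)
    (hg : ∀ i, derMap (linForm (β i)) a = linForm (β i) * g i) :
    principalPart hβv hc hp k ⟨a, ha⟩ =
      (eval p (a k), eval p f, fun ij => eval p (dirDeriv (v ij.1.2) (g ij.1.1 - f))) := by
  have hf' : logCoeff (circuit β c) 0 ⟨a, ha⟩ = f :=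
    logCoeff_eq (by simpa using linForm_sum_smul_ne_zero_of_dual hβv hc) (by simpa using hf)
  have hg' (i : Fin n) : logCoeff (circuit β c) i.succ ⟨a, ha⟩ = g i :=
    logCoeff_eq (by simpa using linForm_ne_zero_of_dual hβv i) (by simpa using hg i)
  rw [← hf', ← funext hg']
  rfl

theorem principalPart_constField :
    principalPart hβv hc hp k ⟨constField p, constField_mem_derivModule_circuit hp⟩ =
      (p k, 0, 0) := by
  rw [principalPart_eq hβv hc hp k _ (f := 0) (g := 0)]
  · simp [constField, Pi.zero_def]
  · simp [derMap_linForm_constField, hp, sum_dotProduct]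
  · simp [derMap_linForm_constField, hp]

theorem principalPart_eulerField :
    principalPart hβv hc hp k ⟨eulerField, eulerField_mem_derivModule _⟩ = (p k, 1, 0) := by
  rw [principalPart_eq hβv hc hp k _ (f := 1) (g := 1)]
  · simp [eulerField, Pi.zero_def]
  · simp [derMap_linForm_eulerField]
  · simp [derMap_linForm_eulerField]

theorem principalPart_koszulField {i j : Fin n} (hij : i < j) :
    principalPart hβv hc hp k
        ⟨koszulField β v c i j, koszulField_mem_derivModule_circuit hβv i j⟩ =
      (0, 0, Pi.single ⟨(i, j), hij⟩ (c j)) := by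
  have hzero : derMap (linForm (∑ l, c l • β l)) (koszulField β v c i j) =
      linForm (∑ l, c l • β l) * 0 := by
    rw [derMap_linForm_sum_smul_koszulField hβv, mul_zero]
  have hcoord : eval p (koszulField β v c i j k) = 0 := by
    simp [koszulField, eval_linForm, hp]
  have hderiv : (fun lm : IncreasingPair n =>
      eval p (dirDeriv (v lm.1.2) (koszulCoeff β c i j lm.1.1 - 0))) =
        Pi.single ⟨(i, j), hij⟩ (c j) := by
    ext lm
    rw [sub_zero, dirDeriv_koszulCoeff_of_lt hβv hij lm.2, Pi.single_apply]
    simp only [Subtype.ext_iff, Prod.ext_iff, apply_ite (eval p), eval_C, map_zero]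
  rw [principalPart_eq hβv hc hp k _ hzero (derMap_linForm_apply_koszulField hβv i j), hcoord,
    hderiv, map_zero]

theorem surjective_principalPart (hk : p k ≠ 0) :
    Function.Surjective (principalPart hβv hc hp k) := by
  rintro ⟨s, t, m⟩
  let P : derivModule (circuit β c) := ⟨constField p, constField_mem_derivModule_circuit hp⟩
  let E : derivModule (circuit β c) := ⟨eulerField, eulerField_mem_derivModule _⟩
  let K (ij : IncreasingPair n) : derivModule (circuit β c) :=
    ⟨koszulField β v c ij.1.1 ij.1.2, koszulField_mem_derivModule_circuit hβv _ _⟩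
  have hsum : ∑ ij, (m ij / c ij.1.2) • Pi.single ij (c ij.1.2) = m := by
    simp [← Pi.single_smul, hc, Finset.univ_sum_single]
  refine ⟨(C (s / p k - t) : S4) • P + (C t : S4) • E +
    ∑ ij, (C (m ij / c ij.1.2) : S4) • K ij, ?_⟩
  calc
    _ = (s / p k - t) • (p k, 0, 0) + t • (p k, 1, 0) +
        ∑ ij, (m ij / c ij.1.2) • ((0 : ℂ), (0 : ℂ), Pi.single ij (c ij.1.2)) := by
      simp only [map_add, map_sum, map_smulₛₗ, P, E, K, principalPart_constField,
        principalPart_eulerField, eval_C,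
        fun ij : IncreasingPair n => principalPart_koszulField hβv hc hp k ij.2]
    _ = (s, t, m) := by
      refine Prod.ext ?_ <| Prod.ext ?_ ?_
      · simp [Prod.fst_sum, sub_mul, hk]
      · simp [Prod.fst_sum, Prod.snd_sum]
      · simpa [Prod.snd_sum] using hsum

end PrincipalPart

end Circuit

theorem not_free_derivModule_of_circuit {ι : Type} [Finite ι] {α : ι → Fin 4 → ℂ} {p : Fin 4 → ℂ}
    (hp : p ≠ 0) {β : Fin 3 → Fin 4 → ℂ} (hβ : LinearIndependent ℂ β) {c : Fin 3 → ℂ}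
    (hc : ∀ i, c i ≠ 0) (hβp : ∀ i, β i ⬝ᵥ p = 0) {e : Fin 4 → ι}
    (he : ∀ i, α (e i) = circuit β c i) (hαp : ∀ H ∉ Set.range e, α H ⬝ᵥ p ≠ 0) :
    ¬ Module.Free S4 (derivModule α) := by
  intro hfree
  obtain ⟨k, hk⟩ := Function.ne_iff.mp hp
  obtain ⟨v, hβv⟩ := exists_dotProduct_eq_ite_of_linearIndependent hβ
  have hle : Module.finrank ℂ (ℂ × ℂ × (IncreasingPair 3 → ℂ)) ≤ 4 :=
    finrank_le_four_of_free_derivModule he hαp (principalPart hβv hc hβp k)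
      (surjective_principalPart hβv hc hβp k hk)
  have hcard : Fintype.card (IncreasingPair 3) = 3 := by decide
  simp [hcard] at hle

theorem r_ne_one : r ≠ 1 := by
  simp [r]

/-- The derivation module of 𝒜_ℭ is not a free `S`-module. -/
theorem not_free_AFrakC : ¬ Module.Free S4 ↥(derivModule AFrakC) := by
  have hβ : LinearIndependent ℂ (fun i : Fin 3 => (Pi.single i.castSucc 1 : Fin 4 → ℂ)) :=
    (Pi.linearIndependent_single_one (Fin 4) ℂ).comp _ (Fin.castSucc_injective 3)
  refine not_free_derivModule_of_circuit (p := ![0, 0, 0, 1]) (by simp) hβ (c := 1) (by simp) ?_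
    (e := ![4, 0, 1, 2]) ?_ ?_
  · intro i
    fin_cases i <;> simp
  · refine Fin.cases ?_ fun i => ?_ <;> ext j
    · fin_cases j <;> simp [circuit, AFrakC, Fin.sum_univ_three]
    · fin_cases i <;> fin_cases j <;> rfl
  · intro H hH
    fin_cases H <;> simp [AFrakC, sub_ne_zero.mpr r_ne_one] at hH ⊢
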